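/- arXiv:2503.17387 — 2 statements merged into one kernel-verified Lean document; each statement's English description precedes it below -/
import Mathlib

section
/- Let Γ be a terminal DG game with at most 3 terminals satisfying: (NofT) N⁺(v) ⊄ T for every non-terminal position v; and (No1M) there is no move (u,a) ∈ E with a ∈ T such that a is the ≻_{i(u)}-best outcome in A. Let σ be a terminal Nash equilibrium of Γ with g(σ) = a ∈ T, and define a situation σ' by: for every non-terminal position u, if σ(u) ∈ T∖{a} then σ'(u) is some (arbitrary) vertex in N⁺(u)∖T, and otherwise σ'(u) = σ(u). Then σ' is also a terminal Nash equilibrium of Γ, with g(σ') = a. -/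
/-!
The play of `σ` ends at `a`, so none of its moves is redirected and `σ'` has the same play
(`iter_switch_eq`, `outcome_switch`).

Suppose player `i` profits from a deviation `τ'` of `σ'`.  Its outcome is a terminal `b` with
`b ≻ᵢ a`, and the last move of the play, `(w, b)`, is made by player `i` because `σ'` never moves
to a terminal other than `a`.  By (No1M) `b` is not best for `i`, so some terminal `c` satisfies
`c ≻ᵢ b ≻ᵢ a`; as there are at most three terminals, *every* terminal other than `a` is better
than `a` for `i`.  Now let `i` play the same moves against `σ`.  The two plays agree until
an opponent's position whose move was redirected is met, and there the play against `σ` stops at a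
terminal other than `a`; if no such position is met it ends at `b` (`iter_hybrid`).  In either
case `i` improves on `a`, contradicting that `σ` is an equilibrium.
-/

open Classical

/-- A deterministic graphical (DG) game on vertex (position) set `V` with player set `ι`.
`adj` is the move relation of the digraph; terminals are exactly the vertices of
out-degree `0`.  `owner x` is the player controlling position `x` (irrelevant for
terminals), `init` is the initial position, and `pref i x y` means that player `i`
strictly prefers outcome `x` to outcome `y`, where outcomes are encoded as
`Option V`: `some t` for a terminal `t` and `none` for the infinite outcome `∞`. -/
structure DGGame (V : Type*) (ι : Type*) where
  adj : V → V → Prop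
  owner : V → ι
  init : V
  pref : ι → Option V → Option V → Prop

namespace DGGame

variable {V ι : Type*} (Γ : DGGame V ι)

/-- A terminal position: no outgoing moves. -/
def Terminal (x : V) : Prop := ∀ y, ¬ Γ.adj x y

/-- The set of outcomes `A = T ∪ {∞}`. -/
def OutcomeSet : Set (Option V) := {x | x = none ∨ ∃ t, Γ.Terminal t ∧ x = some t}

/-- The preferences of each player form a strict linear order on the outcome set. -/
def PrefOrder : Prop :=
  ∀ i : ι,
    (∀ x ∈ Γ.OutcomeSet, ¬ Γ.pref i x x) ∧
    (∀ x ∈ Γ.OutcomeSet, ∀ y ∈ Γ.OutcomeSet, ∀ z ∈ Γ.OutcomeSet,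
        Γ.pref i x y → Γ.pref i y z → Γ.pref i x z) ∧
    (∀ x ∈ Γ.OutcomeSet, ∀ y ∈ Γ.OutcomeSet, x ≠ y → Γ.pref i x y ∨ Γ.pref i y x)

/-- One step of the play determined by a situation `σ` (stays put at terminals). -/
noncomputable def step (σ : V → V) (x : V) : V :=
  if Γ.Terminal x then x else σ x

/-- The position reached after `n` moves of the play starting at the initial position. -/
noncomputable def iter (σ : V → V) (n : ℕ) : V := (Γ.step σ)^[n] Γ.init

/-- The outcome `g(σ)` of a situation: the terminal at which the play from the initial
position ends, or `none` (i.e. `∞`) if the play is infinite. -/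
noncomputable def outcome (σ : V → V) : Option V :=
  if h : ∃ n, Γ.Terminal (Γ.iter σ n) then some (Γ.iter σ (Nat.find h)) else none

/-- A situation: a choice, for every non-terminal position, of a move from it.
(Values at terminal positions are irrelevant.) -/
def IsSituation (σ : V → V) : Prop := ∀ x, ¬ Γ.Terminal x → Γ.adj x (σ x)

/-- Nash equilibrium in pure stationary strategies: no player `i` can obtain a strictly
better outcome by changing his own moves only. -/
def IsNE (σ : V → V) : Prop :=
  Γ.IsSituation σ ∧
  ∀ (i : ι) (σ' : V → V), Γ.IsSituation σ' →
    (∀ x, Γ.owner x ≠ i → σ' x = σ x) →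
    ¬ Γ.pref i (Γ.outcome σ') (Γ.outcome σ)

/-- A terminal Nash equilibrium: a NE whose outcome is a terminal. -/
def IsTerminalNE (σ : V → V) : Prop := Γ.IsNE σ ∧ ∃ t, Γ.outcome σ = some t

/-- A non-terminal Nash equilibrium: a NE whose outcome is `∞`. -/
def IsNonterminalNE (σ : V → V) : Prop := Γ.IsNE σ ∧ Γ.outcome σ = none

/-- A terminal DG game: every player prefers every terminal outcome to `∞`. -/
def TerminalGame : Prop := ∀ (i : ι) (t : V), Γ.Terminal t → Γ.pref i (some t) none

/-- A play-once DG game: every player controls exactly one position. -/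
def PlayOnce : Prop := ∀ i : ι, {x | ¬ Γ.Terminal x ∧ Γ.owner x = i}.ncard = 1

/-- Reachability by a directed path. -/
def Reaches (x y : V) : Prop := Relation.ReflTransGen Γ.adj x y

end DGGame

namespace DGGame

variable {V ι : Type*} (Γ : DGGame V ι)

theorem iter_succ (σ : V → V) (n : ℕ) : Γ.iter σ (n + 1) = Γ.step σ (Γ.iter σ n) := by
  simp only [iter, Function.iterate_succ_apply']

theorem step_of_terminal (σ : V → V) {x : V} (h : Γ.Terminal x) : Γ.step σ x = x := if_pos h

theorem step_of_not_terminal (σ : V → V) {x : V} (h : ¬ Γ.Terminal x) : Γ.step σ x = σ x :=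
  if_neg h

theorem iter_of_le (σ : V → V) {m n : ℕ} (hmn : m ≤ n) (h : Γ.Terminal (Γ.iter σ m)) :
    Γ.iter σ n = Γ.iter σ m := by
  induction n, hmn using Nat.le_induction with
  | base => rfl
  | succ k _ ih => rw [iter_succ, ih, step_of_terminal Γ σ h]

theorem outcome_of_terminal (σ : V → V) {n : ℕ} (h : Γ.Terminal (Γ.iter σ n)) :
    Γ.outcome σ = some (Γ.iter σ n) := by
  have hex : ∃ n, Γ.Terminal (Γ.iter σ n) := ⟨n, h⟩
  rw [outcome, dif_pos hex, Γ.iter_of_le σ (Nat.find_min' hex h) (Nat.find_spec hex)]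

theorem exists_iter_of_outcome {σ : V → V} {t : V} (h : Γ.outcome σ = some t) :
    Γ.Terminal t ∧ ∃ n, Γ.iter σ n = t := by
  by_cases hex : ∃ n, Γ.Terminal (Γ.iter σ n)
  · rw [outcome, dif_pos hex, Option.some.injEq] at h
    exact ⟨h ▸ Nat.find_spec hex, _, h⟩
  · rw [outcome, dif_neg hex] at h
    cases h

theorem exists_last_move (hinit : ¬ Γ.Terminal Γ.init) {σ : V → V} {t : V}
    (h : Γ.outcome σ = some t) : ∃ w, ¬ Γ.Terminal w ∧ σ w = t := by
  obtain ⟨ht, n, hn⟩ := Γ.exists_iter_of_outcome h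
  induction n with
  | zero =>
    have h0 : Γ.init = t := hn
    exact absurd (h0 ▸ ht) hinit
  | succ k ih =>
    by_cases hk : Γ.Terminal (Γ.iter σ k)
    · rw [iter_succ, step_of_terminal Γ σ hk] at hn
      exact ih hn
    · rw [iter_succ, step_of_not_terminal Γ σ hk] at hn
      exact ⟨_, hk, hn⟩

theorem iter_switch_eq {σ σ' : V → V} {a : V} (hout : Γ.outcome σ = some a)
    (hkeep : ∀ u, ¬ Γ.Terminal u → ¬ (Γ.Terminal (σ u) ∧ σ u ≠ a) → σ' u = σ u) (n : ℕ) :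
    Γ.iter σ' n = Γ.iter σ n := by
  induction n with
  | zero => rfl
  | succ k ih =>
    rw [iter_succ, iter_succ, ih]
    by_cases hk : Γ.Terminal (Γ.iter σ k)
    · rw [step_of_terminal Γ _ hk, step_of_terminal Γ _ hk]
    · rw [step_of_not_terminal Γ _ hk, step_of_not_terminal Γ _ hk]
      refine hkeep _ hk ?_
      rintro ⟨h1, h2⟩
      have h3 : Γ.iter σ (k + 1) = σ (Γ.iter σ k) := by
        rw [iter_succ, step_of_not_terminal Γ _ hk]
      have h4 := Γ.outcome_of_terminal σ (n := k + 1) (h3 ▸ h1)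
      rw [hout, h3, Option.some.injEq] at h4
      exact h2 h4.symm

theorem outcome_switch {σ σ' : V → V} {a : V} (hout : Γ.outcome σ = some a)
    (hkeep : ∀ u, ¬ Γ.Terminal u → ¬ (Γ.Terminal (σ u) ∧ σ u ≠ a) → σ' u = σ u) :
    Γ.outcome σ' = some a := by
  obtain ⟨hat, n, hn⟩ := Γ.exists_iter_of_outcome hout
  have h := Γ.iter_switch_eq hout hkeep n
  rw [hn] at h
  rw [Γ.outcome_of_terminal σ' (n := n) (h ▸ hat), h]

/-- The play in which `i` follows `τ'` against `σ` shadows the play of `τ'`, a deviation of `i`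
from `σ'`, until it is stopped at a terminal other than `a`. -/
theorem iter_hybrid {σ σ' τ' : V → V} {a : V} {i : ι}
    (hkeep : ∀ u, ¬ Γ.Terminal u → ¬ (Γ.Terminal (σ u) ∧ σ u ≠ a) → σ' u = σ u)
    (hdev : ∀ x, Γ.owner x ≠ i → τ' x = σ' x) (n : ℕ) :
    let τ : V → V := fun x => if Γ.owner x = i then τ' x else σ x
    Γ.iter τ n = Γ.iter τ' n ∨ (Γ.Terminal (Γ.iter τ n) ∧ Γ.iter τ n ≠ a) := by
  intro τ
  induction n with
  | zero => exact Or.inl rfl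
  | succ k ih =>
    rw [iter_succ, iter_succ]
    rcases ih with ih | ⟨h1, h2⟩
    · rw [← ih]
      set x := Γ.iter τ k
      by_cases hx : Γ.Terminal x
      · exact Or.inl (by rw [step_of_terminal Γ _ hx, step_of_terminal Γ _ hx])
      · rw [step_of_not_terminal Γ _ hx, step_of_not_terminal Γ _ hx]
        by_cases ho : Γ.owner x = i
        · exact Or.inl (if_pos ho)
        · have hτ : τ x = σ x := if_neg ho
          rw [hτ, hdev x ho]
          by_cases hs : Γ.Terminal (σ x) ∧ σ x ≠ a
          · exact Or.inr hs
          · exact Or.inl (hkeep x hx hs).symm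
    · rw [step_of_terminal Γ _ h1]
      exact Or.inr ⟨h1, h2⟩

end DGGame

/-- Switching lemma.  Let `Γ` be a terminal DG game with at most 3 terminals satisfying
(NofT): every non-terminal position has a non-terminal out-neighbour, and
(No1M): there is no move `(u,a)` to a terminal `a` that is the best outcome of the
player controlling `u`.  Let `σ` be a terminal Nash equilibrium with outcome `a ∈ T`,
and let `σ'` be obtained from `σ` by redirecting every move of `σ` that goes to a
terminal different from `a` to an arbitrary non-terminal out-neighbour, keeping all
other moves.  Then `σ'` is also a terminal Nash equilibrium of `Γ`, with outcome `a`. -/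
theorem stmt11 {V ι : Type*} [Finite V] (Γ : DGGame V ι)
    (hinit : ¬ Γ.Terminal Γ.init) (hpref : Γ.PrefOrder)
    (hterm : Γ.TerminalGame)
    (hT3 : {x | Γ.Terminal x}.ncard ≤ 3)
    (hNofT : ∀ x, ¬ Γ.Terminal x → ∃ y, Γ.adj x y ∧ ¬ Γ.Terminal y)
    (hNo1M : ¬ ∃ u a, ¬ Γ.Terminal u ∧ Γ.adj u a ∧ Γ.Terminal a ∧
      (∀ x ∈ Γ.OutcomeSet, x ≠ some a → Γ.pref (Γ.owner u) (some a) x))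
    (σ : V → V) (hNE : Γ.IsNE σ)
    (a : V) (hat : Γ.Terminal a) (hout : Γ.outcome σ = some a)
    (σ' : V → V)
    (hσ' : ∀ u, ¬ Γ.Terminal u →
      ((Γ.Terminal (σ u) ∧ σ u ≠ a) → Γ.adj u (σ' u) ∧ ¬ Γ.Terminal (σ' u)) ∧
      (¬ (Γ.Terminal (σ u) ∧ σ u ≠ a) → σ' u = σ u)) :
    Γ.IsNE σ' ∧ Γ.outcome σ' = some a := by
  have hkeep : ∀ u, ¬ Γ.Terminal u → ¬ (Γ.Terminal (σ u) ∧ σ u ≠ a) → σ' u = σ u :=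
    fun u hu => (hσ' u hu).2
  have hout' := Γ.outcome_switch hout hkeep
  refine ⟨⟨fun u hu => ?_, fun i τ' hτ' hdev hlt => ?_⟩, hout'⟩
  · by_cases hs : Γ.Terminal (σ u) ∧ σ u ≠ a
    · exact ((hσ' u hu).1 hs).1
    · rw [hkeep u hu hs]
      exact hNE.1 u hu
  obtain ⟨hirr, htrans, htot⟩ := hpref i
  have hnone : (none : Option V) ∈ Γ.OutcomeSet := Or.inl rfl
  have hsome : ∀ {t}, Γ.Terminal t → some t ∈ Γ.OutcomeSet := fun ht => Or.inr ⟨_, ht, rfl⟩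
  have hasymm : ∀ x ∈ Γ.OutcomeSet, ∀ y ∈ Γ.OutcomeSet, Γ.pref i x y → ¬ Γ.pref i y x :=
    fun x hx y hy h1 h2 => hirr x hx (htrans x hx y hy x hx h1 h2)
  rw [hout'] at hlt
  cases hb : Γ.outcome τ' with
  | none =>
    rw [hb] at hlt
    exact hasymm _ hnone _ (hsome hat) hlt (hterm i a hat)
  | some b =>
    rw [hb] at hlt
    obtain ⟨hbt, n, hn⟩ := Γ.exists_iter_of_outcome hb
    have hba : b ≠ a := by
      rintro rfl
      exact hirr _ (hsome hat) hlt
    obtain ⟨w, hw, hwb⟩ := Γ.exists_last_move hinit hb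
    have hown : Γ.owner w = i := by
      by_contra hne
      have h1 : σ' w = b := by rw [← hdev w hne, hwb]
      by_cases hs : Γ.Terminal (σ w) ∧ σ w ≠ a
      · exact ((hσ' w hw).1 hs).2 (h1 ▸ hbt)
      · exact hs (by rw [← hkeep w hw hs, h1]; exact ⟨hbt, hba⟩)
    -- `i` can move to `b` from `w`, so `b` is not the best outcome of `i`.
    obtain ⟨c, hct, hcb⟩ : ∃ c, Γ.Terminal c ∧ Γ.pref i (some c) (some b) := by
      by_contra hno
      refine hNo1M ⟨w, b, hw, hwb ▸ hτ' w hw, hbt, fun x hx hxb => ?_⟩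
      rw [hown]
      rcases hx with rfl | ⟨c, hct, rfl⟩
      · exact hterm i b hbt
      · exact (htot _ (hsome hct) _ (hsome hbt) hxb).resolve_left fun h => hno ⟨c, hct, h⟩
    have hca := htrans _ (hsome hct) _ (hsome hbt) _ (hsome hat) hcb hlt
    have hne_cb : c ≠ b := by
      rintro rfl
      exact hirr _ (hsome hct) hcb
    have hne_ca : c ≠ a := by
      rintro rfl
      exact hirr _ (hsome hct) hca
    have hbetter : ∀ t, Γ.Terminal t → t ≠ a → Γ.pref i (some t) (some a) := by
      intro t ht hta
      by_cases htb : t = b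
      · exact htb ▸ hlt
      by_cases htc : t = c
      · exact htc ▸ hca
      have hsub : (({t, c, b, a} : Finset V) : Set V) ⊆ {x | Γ.Terminal x} := by
        intro x hx
        simp only [Finset.coe_insert, Finset.coe_singleton, Set.mem_insert_iff,
          Set.mem_singleton_iff] at hx
        rcases hx with rfl | rfl | rfl | rfl <;> assumption
      have hle := Set.ncard_le_ncard hsub (Set.toFinite _)
      rw [Set.ncard_coe_finset] at hle
      have hcard : ({t, c, b, a} : Finset V).card = 4 := by
        rw [Finset.card_insert_of_notMem, Finset.card_insert_of_notMem,
          Finset.card_insert_of_notMem, Finset.card_singleton] <;> simp [*]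
      omega
    refine hNE.2 i (fun x => if Γ.owner x = i then τ' x else σ x) (fun x hx => ?_)
      (fun x hx => if_neg hx) ?_
    · by_cases ho : Γ.owner x = i
      · simpa [ho] using hτ' x hx
      · simpa [ho] using hNE.1 x hx
    · have hend : Γ.Terminal (Γ.iter (fun x => if Γ.owner x = i then τ' x else σ x) n) ∧
          Γ.iter (fun x => if Γ.owner x = i then τ' x else σ x) n ≠ a := by
        rcases Γ.iter_hybrid hkeep hdev n with h | h
        · rw [h, hn]
          exact ⟨hbt, hba⟩
        · exact h
      rw [Γ.outcome_of_terminal _ hend.1, hout]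
      exact hbetter _ hend.1 hend.2
end

section
/- Let Γ be a play-once DG game satisfying the normalization: every non-terminal position v has N⁺(v) ⊄ T and |N⁺(v) ∩ T| ≤ 1. Define S = { v ∈ V∖T : N⁺(v) ∩ T ≠ ∅ and a(v) ≻_{i(v)} ∞ } (a(v) being the unique terminal in N⁺(v) ∩ T), W = the set of positions reachable from v₀ by a directed path in the induced subgraph G[V∖S], and Q = the set of vertices of V∖(S ∪ W ∪ T) from which a directed cycle is reachable by a (possibly empty) directed path in the induced subgraph G[V∖(S ∪ W ∪ T)]. If the induced subgraph G[W] is acyclic, then every directed cycle of the induced subgraph G[V∖Q] contains a vertex of S. -/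
/-!
Suppose a directed cycle of `G[V∖Q]` avoids `S`. Its vertices are non-terminal, and `W` is closed
under moves that stay outside `S` (`DGGame.Wset_of_adj`). So if the cycle meets `W`, it lies
entirely in `W`, against the acyclicity of `G[W]`. Otherwise it is a cycle of
`G[V∖(S ∪ W ∪ T)]`, and then its vertices belong to `Q` by definition, a contradiction.
-/

open Classical

namespace DGGame

variable {V ι : Type*}

/-- The set `S`: non-terminal positions `v` having a move to a terminal `a(v)` that the
controlling player prefers to `∞`. -/
def Sset (Γ : DGGame V ι) : Set V :=
  {x | ¬ Γ.Terminal x ∧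
    ∃ t, Γ.adj x t ∧ Γ.Terminal t ∧ Γ.pref (Γ.owner x) (some t) none}

/-- The move relation of the induced subgraph `G[V∖S]`. -/
def adjNS (Γ : DGGame V ι) (x y : V) : Prop :=
  Γ.adj x y ∧ x ∉ Γ.Sset ∧ y ∉ Γ.Sset

/-- The set `W`: positions reachable from the initial position by a directed path in
the induced subgraph `G[V∖S]`. -/
def Wset (Γ : DGGame V ι) : Set V :=
  {x | Γ.init ∉ Γ.Sset ∧ x ∉ Γ.Sset ∧ Relation.ReflTransGen Γ.adjNS Γ.init x}

/-- The move relation of the induced subgraph `G[W]`. -/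
def adjW (Γ : DGGame V ι) (x y : V) : Prop :=
  Γ.adj x y ∧ x ∈ Γ.Wset ∧ y ∈ Γ.Wset

/-- The normalization used for play-once games: every non-terminal position has a
non-terminal out-neighbour (`N⁺(v) ⊄ T`) and at most one terminal out-neighbour. -/
def Normalized (Γ : DGGame V ι) : Prop :=
  ∀ x, ¬ Γ.Terminal x →
    (∃ y, Γ.adj x y ∧ ¬ Γ.Terminal y) ∧ {y | Γ.adj x y ∧ Γ.Terminal y}.ncard ≤ 1

end DGGame

namespace DGGame

variable {V ι : Type*}

/-- The set `V∖(S ∪ W ∪ T)`. -/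
def Yset (Γ : DGGame V ι) : Set V :=
  {x | x ∉ Γ.Sset ∧ x ∉ Γ.Wset ∧ ¬ Γ.Terminal x}

/-- The move relation of the induced subgraph `G[V∖(S ∪ W ∪ T)]`. -/
def adjY (Γ : DGGame V ι) (x y : V) : Prop :=
  Γ.adj x y ∧ x ∈ Γ.Yset ∧ y ∈ Γ.Yset

/-- The set `Q`: vertices of `V∖(S ∪ W ∪ T)` from which a directed cycle is reachable
by a (possibly empty) directed path inside `G[V∖(S ∪ W ∪ T)]`. -/
def Qset (Γ : DGGame V ι) : Set V :=
  {x | x ∈ Γ.Yset ∧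
    ∃ u, Relation.ReflTransGen Γ.adjY x u ∧ Relation.TransGen Γ.adjY u u}

/-- The move relation of the induced subgraph `G[V∖Q]`. -/
def adjQ (Γ : DGGame V ι) (x y : V) : Prop :=
  Γ.adj x y ∧ x ∉ Γ.Qset ∧ y ∉ Γ.Qset

end DGGame

/-- A nonempty finite sequence of `r`-steps gives a `TransGen r` chain between its ends. -/
theorem transGen_of_steps {α : Type*} {r : α → α → Prop} (f : ℕ → α) (k : ℕ) (hk : 1 ≤ k)
    (h : ∀ n < k, r (f n) (f (n + 1))) : Relation.TransGen r (f 0) (f k) := by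
  induction k, hk using Nat.le_induction with
  | base => exact .single (h 0 one_pos)
  | succ m hm ih => exact (ih fun n hn => h n (by omega)).tail (h m (by omega))

theorem DGGame.Wset_of_adj {V ι : Type*} {Γ : DGGame V ι} {x y : V} (hx : x ∈ Γ.Wset)
    (hxy : Γ.adj x y) (hy : y ∉ Γ.Sset) : y ∈ Γ.Wset :=
  ⟨hx.1, hy, hx.2.2.tail ⟨hxy, hx.2.1, hy⟩⟩

/-- In a normalized play-once DG game, if the induced subgraph `G[W]` is acyclic, then
every directed cycle `f 0, f 1, …, f k = f 0` of the induced subgraph `G[V∖Q]`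
contains a vertex of `S`. -/
theorem stmt13 {V ι : Type*} [Finite V] (Γ : DGGame V ι)
    (hinit : ¬ Γ.Terminal Γ.init) (hpref : Γ.PrefOrder)
    (hpo : Γ.PlayOnce) (hnorm : Γ.Normalized)
    (hacyc : ¬ ∃ x, Relation.TransGen Γ.adjW x x) :
    ∀ (k : ℕ) (f : ℕ → V), 1 ≤ k →
      (∀ n < k, Γ.adjQ (f n) (f (n + 1))) → f k = f 0 →
      (∀ m < k, ∀ n < k, f m = f n → m = n) →
      ∃ n < k, f n ∈ Γ.Sset := by
  intro k f hk hf hcyc _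
  by_contra! hS
  have hS' : ∀ n ≤ k, f n ∉ Γ.Sset := fun n hn => by
    rcases hn.lt_or_eq with h | rfl
    · exact hS n h
    · rw [hcyc]; exact hS 0 hk
  have hprop : ∀ m n, m ≤ n → n ≤ k → f m ∈ Γ.Wset → f n ∈ Γ.Wset := by
    intro m n hmn
    induction n, hmn using Nat.le_induction with
    | base => exact fun _ h => h
    | succ n _ ih =>
      exact fun hn h => DGGame.Wset_of_adj (ih (by omega) h) (hf n (by omega)).1 (hS' _ hn)
  by_cases hW : ∃ m ≤ k, f m ∈ Γ.Wset
  · obtain ⟨m, hm, hmW⟩ := hW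
    -- Follow the cycle from `f m` around to `f k = f 0`, and from there to every vertex.
    have h0 : f 0 ∈ Γ.Wset := hcyc ▸ hprop m k hm le_rfl hmW
    have hall : ∀ n ≤ k, f n ∈ Γ.Wset := fun n hn => hprop 0 n (Nat.zero_le _) hn h0
    have hT := transGen_of_steps (r := Γ.adjW) f k hk
      fun n hn => ⟨(hf n hn).1, hall n hn.le, hall (n + 1) hn⟩
    rw [hcyc] at hT
    exact hacyc ⟨_, hT⟩
  · push Not at hW
    have hY' : ∀ n < k, f n ∈ Γ.Yset := fun n hn =>
      ⟨hS' n hn.le, hW n hn.le, fun h => h _ (hf n hn).1⟩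
    have hY : ∀ n ≤ k, f n ∈ Γ.Yset := fun n hn => by
      rcases hn.lt_or_eq with h | rfl
      · exact hY' n h
      · rw [hcyc]; exact hY' 0 hk
    have hT := transGen_of_steps (r := Γ.adjY) f k hk
      fun n hn => ⟨(hf n hn).1, hY n hn.le, hY (n + 1) hn⟩
    rw [hcyc] at hT
    exact (hf 0 hk).2.1 ⟨hY' 0 hk, _, .refl, hT⟩
end
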